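/- arXiv:2306.10374 — 4 statements merged into one kernel-verified Lean document; each statement's English description precedes it below -/
import Mathlib

section
/- For all ŷ, y ∈ ℝ^d and any choice of hindsight optimal action z*(y), the SPO+ loss upper bounds the SPO loss: ℓ_SPO(ŷ, y) ≤ ℓ_SPO+(ŷ, y). -/
open scoped RealInnerProductSpace

/-- The SPO loss: worst-case cost over the set of minimizers of the predicted objective,
minus the optimal hindsight value. -/
noncomputable def lossSPO {d : ℕ} (Z : Set (EuclideanSpace ℝ (Fin d)))
    (yhat y : EuclideanSpace ℝ (Fin d)) : ℝ :=
  sSup ((fun z => ⟪y, z⟫) '' {z ∈ Z | ∀ w ∈ Z, ⟪yhat, z⟫ ≤ ⟪yhat, w⟫}) -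
    sInf ((fun z => ⟪y, z⟫) '' Z)

/-- The SPO+ loss with hindsight optimal action `zstar`. -/
noncomputable def lossSPOplus {d : ℕ} (Z : Set (EuclideanSpace ℝ (Fin d)))
    (yhat y zstar : EuclideanSpace ℝ (Fin d)) : ℝ :=
  sSup ((fun z => ⟪y - (2 : ℝ) • yhat, z⟫) '' Z) + 2 * ⟪yhat, zstar⟫ - ⟪y, zstar⟫

section

variable {α : Type*} {Z : Set α} {cost pred : α → ℝ} {a : ℝ} {z zstar : α}

theorem sInf_image_eq_of_isMinOn (hzstar : zstar ∈ Z) (hmin : IsMinOn cost Z zstar) :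
    sInf (cost '' Z) = cost zstar :=
  IsLeast.csInf_eq ⟨Set.mem_image_of_mem cost hzstar, Set.forall_mem_image.2 (isMinOn_iff.1 hmin)⟩

theorem le_sSup_image_sub_mul_add_of_isMinOn (ha : 0 ≤ a)
    (hbdd : BddAbove ((fun w => cost w - a * pred w) '' Z))
    (hz : z ∈ Z) (hmin : IsMinOn pred Z z) (hzstar : zstar ∈ Z) :
    cost z ≤ sSup ((fun w => cost w - a * pred w) '' Z) + a * pred zstar :=
  calc
    cost z = (cost z - a * pred z) + a * pred z := (sub_add_cancel _ _).symm
    _ ≤ sSup ((fun w => cost w - a * pred w) '' Z) + a * pred zstar :=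
      add_le_add (le_csSup hbdd (Set.mem_image_of_mem _ hz))
        (mul_le_mul_of_nonneg_left (isMinOn_iff.1 hmin zstar hzstar) ha)

/-- The SPO and SPO+ losses are the case `cost = ⟪y, ·⟫`, `pred = ⟪yhat, ·⟫`, `a = 2`. -/
theorem stmt4_general (ha : 0 ≤ a) (hbdd : BddAbove ((fun z => cost z - a * pred z) '' Z))
    (hargmin : {z ∈ Z | IsMinOn pred Z z}.Nonempty)
    (hzstar : zstar ∈ Z) (hmin : IsMinOn cost Z zstar) :
    sSup (cost '' {z ∈ Z | IsMinOn pred Z z}) - sInf (cost '' Z) ≤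
      sSup ((fun z => cost z - a * pred z) '' Z) + a * pred zstar - cost zstar := by
  rw [sInf_image_eq_of_isMinOn hzstar hmin]
  refine sub_le_sub_right (csSup_le (hargmin.image cost) (Set.forall_mem_image.2 ?_)) _
  rintro z ⟨hz, hz_min⟩
  exact le_sSup_image_sub_mul_add_of_isMinOn ha hbdd hz hz_min hzstar

end

/-- The SPO+ loss upper bounds the SPO loss. -/
theorem stmt4 {d : ℕ} (Z : Set (EuclideanSpace ℝ (Fin d)))
    (hne : Z.Nonempty) (hcomp : IsCompact Z)
    (y yhat zstar : EuclideanSpace ℝ (Fin d))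
    (hzstar : zstar ∈ Z) (hmin : ∀ w ∈ Z, ⟪y, zstar⟫ ≤ ⟪y, w⟫) :
    lossSPO Z yhat y ≤ lossSPOplus Z yhat y zstar := by
  simpa only [lossSPO, lossSPOplus, inner_sub_left, real_inner_smul_left, isMinOn_iff] using
    stmt4_general (cost := fun z => ⟪y, z⟫) (pred := fun z => ⟪yhat, z⟫) zero_le_two
      (hcomp.bddAbove_image (by fun_prop)) (hcomp.exists_isMinOn hne (by fun_prop)) hzstar hmin
end

section
/- Fix y, ŷ ∈ ℝ^d and let z̃ ∈ argmin_{z ∈ Z} ⟨2ŷ − y, z⟩ (equivalently, z̃ achieves max_{z ∈ Z} ⟨y − 2ŷ, z⟩). Then 2(z*(y) − z̃) is a subgradient of ℓ_SPO+(·, y) at ŷ: for every u ∈ ℝ^d, ℓ_SPO+(u, y) ≥ ℓ_SPO+(ŷ, y) + ⟨2(z*(y) − z̃), u − ŷ⟩. -/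
open scoped RealInnerProductSpace

section InnerProductSpace

variable {E : Type*} [NormedAddCommGroup E] [InnerProductSpace ℝ E]

/-- The support function `x ↦ sup_{z ∈ Z} ⟪x, z⟫` of a set `Z`, which carries the nonlinear part of
the SPO+ loss. It is real-valued, with junk value `0` where the supremum is infinite or `Z` is
empty. -/
noncomputable def supportFunction (Z : Set E) (x : E) : ℝ :=
  sSup ((fun z => ⟪x, z⟫) '' Z)

/-- The SPO+ loss of the prediction `yhat` for the cost `y`, over a set `Z` of feasible actions in
a real inner product space and relative to an arbitrary reference action `zref`, whose usual choice
is `z*(y)`. For `E = EuclideanSpace ℝ (Fin d)` it is definitionally `lossSPOplus`. -/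
noncomputable def spoPlusLoss (Z : Set E) (yhat y zref : E) : ℝ :=
  supportFunction Z (y - (2 : ℝ) • yhat) + 2 * ⟪yhat, zref⟫ - ⟪y, zref⟫

variable {Z : Set E}

theorem supportFunction_eq_inner_of_isMaxOn {x z : E} (hz : z ∈ Z)
    (hmax : IsMaxOn (fun w => ⟪x, w⟫) Z z) : supportFunction Z x = ⟪x, z⟫ :=
  IsGreatest.csSup_eq ⟨Set.mem_image_of_mem _ hz, Set.forall_mem_image.2 hmax⟩

theorem inner_le_supportFunction {x z : E} (hbdd : BddAbove ((fun w => ⟪x, w⟫) '' Z))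
    (hz : z ∈ Z) : ⟪x, z⟫ ≤ supportFunction Z x :=
  le_csSup hbdd (Set.mem_image_of_mem _ hz)

theorem supportFunction_add_inner_sub_le_of_isMaxOn {x x' z : E} (hz : z ∈ Z)
    (hmax : IsMaxOn (fun w => ⟪x, w⟫) Z z) (hbdd : BddAbove ((fun w => ⟪x', w⟫) '' Z)) :
    supportFunction Z x + ⟪x' - x, z⟫ ≤ supportFunction Z x' :=
  calc
    supportFunction Z x + ⟪x' - x, z⟫ = ⟪x, z⟫ + ⟪x' - x, z⟫ := by
      rw [supportFunction_eq_inner_of_isMaxOn hz hmax]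
    _ = ⟪x', z⟫ := by rw [← inner_add_left, add_sub_cancel]
    _ ≤ supportFunction Z x' := inner_le_supportFunction hbdd hz

theorem spoPlusLoss_eq_supportFunction_sub_inner (yhat y zref : E) :
    spoPlusLoss Z yhat y zref =
      supportFunction Z (y - (2 : ℝ) • yhat) - ⟪y - (2 : ℝ) • yhat, zref⟫ := by
  rw [spoPlusLoss, inner_sub_left, real_inner_smul_left]
  ring

/- The loss is `x ↦ supportFunction Z x - ⟪x, zref⟫` evaluated at `x = y - 2 ŷ`. A maximizer of
`⟪x, ·⟫` over `Z` is a subgradient of the support function at `x`, so `ztilde - zref` is a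
subgradient of the difference, and the chain rule multiplies it by `-2`. -/
theorem stmt6_general {y yhat zref ztilde u : E} (hzt : ztilde ∈ Z)
    (hztmin : IsMinOn (fun w => ⟪(2 : ℝ) • yhat - y, w⟫) Z ztilde)
    (hbdd : BddAbove ((fun w => ⟪y - (2 : ℝ) • u, w⟫) '' Z)) :
    spoPlusLoss Z yhat y zref + ⟪(2 : ℝ) • (zref - ztilde), u - yhat⟫ ≤
      spoPlusLoss Z u y zref := by
  have hmax : IsMaxOn (fun w => ⟪y - (2 : ℝ) • yhat, w⟫) Z ztilde := by
    simpa only [← inner_neg_left, neg_sub] using hztmin.neg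
  have hsupport := supportFunction_add_inner_sub_le_of_isMaxOn hzt hmax hbdd
  have hchain : ⟪(2 : ℝ) • (zref - ztilde), u - yhat⟫ =
      ⟪(y - (2 : ℝ) • u) - (y - (2 : ℝ) • yhat), ztilde - zref⟫ := by
    rw [sub_sub_sub_cancel_left, ← smul_sub, ← neg_sub u, ← neg_sub zref, smul_neg,
      inner_neg_neg, real_inner_smul_left, real_inner_smul_left, real_inner_comm]
  rw [spoPlusLoss_eq_supportFunction_sub_inner, spoPlusLoss_eq_supportFunction_sub_inner, hchain,
    inner_sub_right, inner_sub_left (y - (2 : ℝ) • u) _ zref]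
  linarith

end InnerProductSpace

/-- If `ztilde` minimizes `⟪2ŷ - y, ·⟫` over `Z`, then `2(z*(y) - ztilde)` is a subgradient
of the SPO+ loss `ℓ_SPO+(·, y)` at `ŷ`. -/
theorem stmt6 {d : ℕ} (Z : Set (EuclideanSpace ℝ (Fin d)))
    (hne : Z.Nonempty) (hcomp : IsCompact Z)
    (y yhat zstar ztilde : EuclideanSpace ℝ (Fin d))
    (hzstar : zstar ∈ Z) (hmin : ∀ w ∈ Z, ⟪y, zstar⟫ ≤ ⟪y, w⟫)
    (hzt : ztilde ∈ Z)
    (hztmin : ∀ w ∈ Z, ⟪(2 : ℝ) • yhat - y, ztilde⟫ ≤ ⟪(2 : ℝ) • yhat - y, w⟫) :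
    ∀ u : EuclideanSpace ℝ (Fin d),
      lossSPOplus Z yhat y zstar + ⟪(2 : ℝ) • (zstar - ztilde), u - yhat⟫ ≤
        lossSPOplus Z u y zstar :=
  fun _ => stmt6_general hzt (isMinOn_iff.2 hztmin) (hcomp.bddAbove_image (by fun_prop))
end

section
/- Let P denote the orthogonal projection of H onto the finite-dimensional subspace S := span{k_1, …, k_N}. Then for every φ ∈ H, F(P φ) ≤ F(φ), with strict inequality whenever φ ∉ S. Consequently, every minimizer φ* of F over H lies in span{k_1, …, k_N}, i.e., φ* = Σ_{i=1}^N a_i k_i for some a ∈ ℝ^N (representer theorem for regularized empirical risk minimization). -/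
open scoped RealInnerProductSpace

section RegularizedRisk

open Submodule

variable {𝕜 H ι : Type*} [RCLike 𝕜] [NormedAddCommGroup H] [InnerProductSpace 𝕜 H]

theorem inner_starProjection_left_of_mem (K : Submodule 𝕜 H) [K.HasOrthogonalProjection]
    (φ : H) {v : H} (hv : v ∈ K) : inner 𝕜 (K.starProjection φ) v = inner 𝕜 φ v := by
  rw [inner_starProjection_left_eq_right, starProjection_eq_self_iff.mpr hv]

theorem norm_starProjection_lt_of_notMem {K : Submodule 𝕜 H} [K.HasOrthogonalProjection]
    {φ : H} (hφ : φ ∉ K) : ‖K.starProjection φ‖ < ‖φ‖ :=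
  (K.norm_starProjection_apply_le φ).lt_of_ne (mt (K.mem_iff_norm_starProjection φ).mpr hφ)

/-- The regularized empirical risk of `φ`: an arbitrary function `G` of the evaluations of `φ`
against the kernel sections `k i`, plus the penalty `Ω ‖φ‖`. Only the values of `Ω` on `[0, ∞)`
matter; ridge regularization is `Ω r = lam * r ^ 2`. -/
def regularizedRisk (k : ι → H) (G : (ι → 𝕜) → ℝ) (Ω : ℝ → ℝ) (φ : H) : ℝ :=
  G (fun i => inner 𝕜 φ (k i)) + Ω ‖φ‖

variable {K : Submodule 𝕜 H} [K.HasOrthogonalProjection] {k : ι → H} {Ω : ℝ → ℝ}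

theorem regularizedRisk_starProjection (hk : ∀ i, k i ∈ K) (G : (ι → 𝕜) → ℝ) (Ω : ℝ → ℝ)
    (φ : H) :
    regularizedRisk k G Ω (K.starProjection φ) =
      G (fun i => inner 𝕜 φ (k i)) + Ω ‖K.starProjection φ‖ := by
  simp only [regularizedRisk, inner_starProjection_left_of_mem K φ (hk _)]

theorem regularizedRisk_starProjection_le (hk : ∀ i, k i ∈ K) (G : (ι → 𝕜) → ℝ)
    (hΩ : MonotoneOn Ω (Set.Ici 0)) (φ : H) :
    regularizedRisk k G Ω (K.starProjection φ) ≤ regularizedRisk k G Ω φ := by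
  rw [regularizedRisk_starProjection hk]
  exact add_le_add_right
    (hΩ (norm_nonneg _) (norm_nonneg _) (K.norm_starProjection_apply_le φ)) _

theorem regularizedRisk_starProjection_lt (hk : ∀ i, k i ∈ K) (G : (ι → 𝕜) → ℝ)
    (hΩ : StrictMonoOn Ω (Set.Ici 0)) {φ : H} (hφ : φ ∉ K) :
    regularizedRisk k G Ω (K.starProjection φ) < regularizedRisk k G Ω φ := by
  rw [regularizedRisk_starProjection hk]
  exact add_lt_add_right
    (hΩ (norm_nonneg _) (norm_nonneg _) (norm_starProjection_lt_of_notMem hφ)) _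

theorem mem_of_forall_regularizedRisk_le (hk : ∀ i, k i ∈ K) (G : (ι → 𝕜) → ℝ)
    (hΩ : StrictMonoOn Ω (Set.Ici 0)) {φstar : H}
    (hmin : ∀ φ, regularizedRisk k G Ω φstar ≤ regularizedRisk k G Ω φ) : φstar ∈ K := by
  by_contra hφstar
  exact (regularizedRisk_starProjection_lt hk G hΩ hφstar).not_ge (hmin _)

end RegularizedRisk

theorem strictMonoOn_const_mul_pow {R : Type*} [Semiring R] [LinearOrder R]
    [IsStrictOrderedRing R] {c : R} (hc : 0 < c) {n : ℕ} (hn : n ≠ 0) :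
    StrictMonoOn (fun r => c * r ^ n) (Set.Ici 0) :=
  (strictMono_mul_left_of_pos hc).comp_strictMonoOn (pow_left_strictMonoOn₀ hn)

-- For an infinite family in a complete space, `K` can be the closure of the span of the `k i`.
theorem stmt9_general {𝕜 H ι : Type*} [RCLike 𝕜] [NormedAddCommGroup H] [InnerProductSpace 𝕜 H]
    {K : Submodule 𝕜 H} {k : ι → H} (hk : ∀ i, k i ∈ K) (G : (ι → 𝕜) → ℝ)
    {Ω : ℝ → ℝ} (hΩ : StrictMonoOn Ω (Set.Ici 0))
    {F : H → ℝ} (hF : ∀ φ, F φ = regularizedRisk k G Ω φ)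
    {P : H → H} (hP : ∀ φ, P φ ∈ K ∧ φ - P φ ∈ Kᗮ) :
    (∀ φ, F (P φ) ≤ F φ ∧ (φ ∉ K → F (P φ) < F φ)) ∧
      ∀ φstar, (∀ φ, F φstar ≤ F φ) → φstar ∈ K := by
  obtain rfl : F = regularizedRisk k G Ω := funext hF
  have : K.HasOrthogonalProjection := ⟨fun φ => ⟨P φ, hP φ⟩⟩
  obtain rfl : P = K.starProjection := funext fun φ =>
    (Submodule.eq_starProjection_of_mem_orthogonal (hP φ).1 (hP φ).2).symm
  exact ⟨fun φ => ⟨regularizedRisk_starProjection_le hk G hΩ.monotoneOn φ,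
      regularizedRisk_starProjection_lt hk G hΩ⟩,
    fun _ => mem_of_forall_regularizedRisk_le hk G hΩ⟩

/-- Representer theorem for regularized empirical risk minimization: if `P` is the
orthogonal projection onto `S := span{k_1, …, k_N}`, then `F (P φ) ≤ F φ` for every `φ`,
with strict inequality whenever `φ ∉ S`; consequently every minimizer of `F` lies in `S`. -/
theorem stmt9 {H : Type*} [NormedAddCommGroup H] [InnerProductSpace ℝ H]
    {N : ℕ} (k : Fin N → H) (G : (Fin N → ℝ) → ℝ) (lam : ℝ) (hlam : 0 < lam)
    (F : H → ℝ)
    (hF : ∀ φ : H, F φ = G (fun i => ⟪φ, k i⟫) + lam * ‖φ‖ ^ 2)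
    (P : H → H)
    (hP : ∀ φ : H, P φ ∈ Submodule.span ℝ (Set.range k) ∧
        φ - P φ ∈ (Submodule.span ℝ (Set.range k))ᗮ) :
    (∀ φ : H, F (P φ) ≤ F φ ∧
        (φ ∉ Submodule.span ℝ (Set.range k) → F (P φ) < F φ)) ∧
    (∀ φstar : H, (∀ φ : H, F φstar ≤ F φ) →
        φstar ∈ Submodule.span ℝ (Set.range k)) :=
  stmt9_general (fun i => Submodule.subset_span (Set.mem_range_self i)) G
    (strictMonoOn_const_mul_pow hlam two_ne_zero) hF hP
end

section
/- Assume the covariates x_1, …, x_N are pairwise distinct. Then the worst-case empirical regret over all policies consistent with the predictions equals the empirical average of the SPO loss: sup { (1/N) Σ_{i=1}^N ( ⟨y_i, π(x_i)⟩ − v(y_i) ) : π : X → Z with π(x) ∈ argmin_{z ∈ Z} ⟨g(x), z⟩ for all x ∈ X } = (1/N) Σ_{i=1}^N ℓ_SPO(g(x_i), y_i), and this supremum is attained. -/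
open scoped RealInnerProductSpace

/-! The policies consistent with `g` are the selections of `a ↦ argmin_Z ⟪g a, ·⟫`. As the
covariates are distinct, the values of such a policy at the data points are arbitrary, independent
elements of the argmin sets at these points: elsewhere the policy is filled in by any minimizer.
So the maximum over policies of an average, or any monotone aggregate, of the regrets is the
aggregate of the separate maxima, which are attained because the argmin sets are nonempty and
compact. -/

open Set

section Selections

variable {X ι E : Type*} {x : ι → X}

lemma image_comp_univ_pi (hx : Function.Injective x) {S : X → Set E}
    (hS : ∀ a, (S a).Nonempty) :
    (fun π : X → E => π ∘ x) '' univ.pi S = univ.pi (S ∘ x) := by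
  refine Subset.antisymm (image_subset_iff.2 fun π hπ i _ => hπ (x i) trivial) fun z hz => ?_
  choose fallback hfallback using hS
  refine ⟨Function.extend x z fallback, fun a _ => ?_, Function.extend_comp hx z fallback⟩
  by_cases ha : ∃ i, x i = a
  · obtain ⟨i, rfl⟩ := ha
    rw [hx.extend_apply]
    exact hz i trivial
  · rw [Function.extend_apply' _ _ _ ha]
    exact hfallback a

lemma isGreatest_univ_pi {α : ι → Type*} [∀ i, Preorder (α i)] {t : ∀ i, Set (α i)}
    {m : ∀ i, α i} (ht : ∀ i, IsGreatest (t i) (m i)) : IsGreatest (univ.pi t) m :=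
  ⟨fun i _ => (ht i).1, fun _ hr i => (ht i).2 (hr i trivial)⟩

lemma isGreatest_image_eval_univ_pi {α : ι → Type*} [∀ i, Preorder (α i)]
    (hx : Function.Injective x) {S : X → Set E} (hS : ∀ a, (S a).Nonempty)
    {f : ∀ i, E → α i} {m : ∀ i, α i} (hm : ∀ i, IsGreatest (f i '' S (x i)) (m i)) :
    IsGreatest ((fun (π : X → E) i => f i (π (x i))) '' univ.pi S) m := by
  have himage : (fun (π : X → E) i => f i (π (x i))) '' univ.pi S =
      univ.pi fun i => f i '' S (x i) := by
    rw [← piMap_image_univ_pi, ← Function.comp_def S x, ← image_comp_univ_pi hx hS, image_image]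
    rfl
  rw [himage]
  exact isGreatest_univ_pi hm

end Selections

section Argmin

variable {E β : Type*}

/-- The set of minimizers of `p` over `Z`: the decisions that are optimal for the predicted
objective `p`. -/
def argminOn [LE β] (p : E → β) (Z : Set E) : Set E :=
  {z ∈ Z | ∀ w ∈ Z, p z ≤ p w}

/-- The SPO loss for arbitrary objectives: the largest regret, under the true objective `f`, of a
decision minimizing the predicted objective `p` over `Z`. For linear objectives it unfolds to
`lossSPO`. It is meaningful only when `f` is bounded below on `Z` and bounded above on a nonempty
`argminOn p Z`. -/
noncomputable def worstCaseRegret [LE β] (p : E → β) (f : E → ℝ) (Z : Set E) : ℝ :=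
  sSup (f '' argminOn p Z) - sInf (f '' Z)

variable [TopologicalSpace E] [LinearOrder β] {Z : Set E} {p : E → β}

lemma argminOn_nonempty (hne : Z.Nonempty) (hZ : IsCompact Z)
    (hp : LowerSemicontinuousOn p Z) : (argminOn p Z).Nonempty :=
  hp.exists_isMinOn hne hZ

lemma isCompact_argminOn (hZ : IsCompact Z) (hp : LowerSemicontinuousOn p Z) :
    IsCompact (argminOn p Z) := by
  obtain hempty | ⟨z₀, hz₀⟩ := (argminOn p Z).eq_empty_or_nonempty
  · exact hempty ▸ isCompact_empty
  · have hsublevel : argminOn p Z = Z ∩ p ⁻¹' Iic (p z₀) :=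
      Subset.antisymm (fun z hz => ⟨hz.1, hz.2 z₀ hz₀.1⟩)
        fun z hz => ⟨hz.1, fun w hw => hz.2.trans (hz₀.2 w hw)⟩
    exact hsublevel ▸ hp.isCompact_inter_preimage_Iic hZ (p z₀)

lemma isGreatest_worstCaseRegret (hne : Z.Nonempty) (hZ : IsCompact Z)
    (hp : LowerSemicontinuousOn p Z) {f : E → ℝ} (hf : ContinuousOn f Z) :
    IsGreatest ((fun z => f z - sInf (f '' Z)) '' argminOn p Z) (worstCaseRegret p f Z) := by
  have hcost : IsGreatest (f '' argminOn p Z) (sSup (f '' argminOn p Z)) :=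
    ((isCompact_argminOn hZ hp).image_of_continuousOn (hf.mono fun _ hz => hz.1)).isGreatest_sSup
      ((argminOn_nonempty hne hZ hp).image f)
  have hsub : Monotone fun r : ℝ => r - sInf (f '' Z) := fun _ _ h => sub_le_sub_right h _
  simpa only [worstCaseRegret, image_image] using hsub.map_isGreatest hcost

end Argmin

lemma monotone_const_mul_sum {ι R : Type*} [Fintype ι] [Semiring R] [PartialOrder R]
    [IsOrderedRing R] {c : R} (hc : 0 ≤ c) : Monotone fun r : ι → R => c * ∑ i, r i :=
  fun _ _ hr => mul_le_mul_of_nonneg_left (Finset.sum_le_sum fun i _ => hr i) hc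

theorem stmt13_general {X ι E β γ : Type*} [TopologicalSpace E] [LinearOrder β] [Preorder γ]
    {Z : Set E} (hne : Z.Nonempty) (hZ : IsCompact Z) {x : ι → X} (hx : Function.Injective x)
    {p : X → E → β} (hp : ∀ a, LowerSemicontinuousOn (p a) Z)
    {f : ι → E → ℝ} (hf : ∀ i, ContinuousOn (f i) Z)
    {Φ : (ι → ℝ) → γ} (hΦ : Monotone Φ) :
    IsGreatest
      {r : γ | ∃ π : X → E, (∀ a, π a ∈ argminOn (p a) Z) ∧
        r = Φ fun i => f i (π (x i)) - sInf (f i '' Z)}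
      (Φ fun i => worstCaseRegret (p (x i)) (f i) Z) := by
  have hregret := isGreatest_image_eval_univ_pi hx
    (fun a => argminOn_nonempty hne hZ (hp a))
    (fun i => isGreatest_worstCaseRegret hne hZ (hp (x i)) (hf i))
  convert! hΦ.map_isGreatest hregret using 1
  ext r
  simp only [image_image, mem_image, mem_univ_pi, eq_comm, mem_ofPred_eq]

/-- If the covariates are pairwise distinct, the worst-case empirical regret over all
policies consistent with the predictions equals the empirical average of the SPO loss,
and this supremum is attained. -/
theorem stmt13 {X : Type*} {d N : ℕ} (Z : Set (EuclideanSpace ℝ (Fin d)))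
    (hne : Z.Nonempty) (hcomp : IsCompact Z)
    (x : Fin N → X) (y : Fin N → EuclideanSpace ℝ (Fin d))
    (hx : Function.Injective x)
    (g : X → EuclideanSpace ℝ (Fin d)) :
    IsGreatest
      {r : ℝ | ∃ π : X → EuclideanSpace ℝ (Fin d),
        (∀ a : X, π a ∈ Z ∧ ∀ w ∈ Z, ⟪g a, π a⟫ ≤ ⟪g a, w⟫) ∧
        r = (N : ℝ)⁻¹ * ∑ i, (⟪y i, π (x i)⟫ - sInf ((fun z => ⟪y i, z⟫) '' Z))}
      ((N : ℝ)⁻¹ * ∑ i, lossSPO Z (g (x i)) (y i)) :=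
  stmt13_general hne hcomp hx
    (fun a => (innerSL ℝ (g a)).continuous.lowerSemicontinuous.lowerSemicontinuousOn Z)
    (fun i => (innerSL ℝ (y i)).continuous.continuousOn)
    (monotone_const_mul_sum (inv_nonneg.2 N.cast_nonneg))
end
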